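/- arXiv:2112.13993 — 2 statements merged into one kernel-verified Lean document; each statement's English description precedes it below -/
import Mathlib

section
/- Let r_n, s_n be real sequences with s_n ≥ 0 for all n, not all s_n zero, and suppose the power series R(x) = Σ r_n x^n and S(x) = Σ s_n x^n converge for |x| < 1. If r_n/s_n is strictly increasing in n (where defined), then x ↦ R(x)/S(x) is strictly increasing on (0,1). -/
/-! For `0 < x < y`, the numerator of `R y / S y - R x / S x` is a `2 × 2` determinant of series.
By the Cauchy–Binet identity it is half the sum over all pairs `(i, j)` of
`(r i * s j - r j * s i) * (y ^ i * x ^ j - y ^ j * x ^ i)`. Both factors are nonpositive for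
`i < j` and nonnegative for `j < i`, because `r i / s i` and `(y / x) ^ i` both increase
with `i`. -/

theorem hasSum_cauchyBinet_two {ι A : Type*} [NormedCommRing A] [CompleteSpace A]
    {r s u v : ι → A} (hru : Summable fun i => ‖r i * u i‖) (hrv : Summable fun i => ‖r i * v i‖)
    (hsu : Summable fun i => ‖s i * u i‖) (hsv : Summable fun i => ‖s i * v i‖) :
    HasSum (fun p : ι × ι =>
        (r p.1 * s p.2 - r p.2 * s p.1) * (u p.1 * v p.2 - u p.2 * v p.1))
      (2 * ((∑' i, r i * u i) * (∑' i, s i * v i) - (∑' i, r i * v i) * ∑' i, s i * u i)) := by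
  rw [tsum_mul_tsum_of_summable_norm hru hsv, tsum_mul_tsum_of_summable_norm hrv hsu, two_mul]
  have hsub := (summable_mul_of_summable_norm hru hsv).hasSum.sub
    (summable_mul_of_summable_norm hrv hsu).hasSum
  have hswap := (Equiv.prodComm ι ι).hasSum_iff.2 hsub
  refine (hsub.add hswap).congr_fun fun p => ?_
  simp only [Function.comp_apply, Equiv.prodComm_apply, Prod.fst_swap, Prod.snd_swap]
  ring

theorem minor_mul_minor_nonneg {ι A : Type*} [LinearOrder ι]
    [CommRing A] [PartialOrder A] [IsOrderedRing A] {r s u v : ι → A}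
    (hrs : ∀ ⦃i j⦄, i < j → r i * s j ≤ r j * s i) (huv : ∀ ⦃i j⦄, i < j → u i * v j ≤ u j * v i)
    (i j : ι) : 0 ≤ (r i * s j - r j * s i) * (u i * v j - u j * v i) := by
  rcases lt_trichotomy i j with hij | rfl | hji
  · exact mul_nonneg_of_nonpos_of_nonpos (sub_nonpos.2 (hrs hij)) (sub_nonpos.2 (huv hij))
  · simp
  · exact mul_nonneg (sub_nonneg.2 (hrs hji)) (sub_nonneg.2 (huv hji))

theorem tsum_mul_tsum_lt_tsum_mul_tsum {ι : Type*} [LinearOrder ι] {r s u v : ι → ℝ}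
    (hru : Summable fun i => r i * u i) (hrv : Summable fun i => r i * v i)
    (hsu : Summable fun i => s i * u i) (hsv : Summable fun i => s i * v i)
    (hrs : ∀ ⦃i j⦄, i < j → r i * s j ≤ r j * s i) (huv : ∀ ⦃i j⦄, i < j → u i * v j ≤ u j * v i)
    {i j : ι} (hrs_lt : r i * s j < r j * s i) (huv_lt : u i * v j < u j * v i) :
    (∑' k, r k * v k) * ∑' k, s k * u k < (∑' k, r k * u k) * ∑' k, s k * v k := by
  have hsum := hasSum_cauchyBinet_two hru.norm hrv.norm hsu.norm hsv.norm
  have hpos := hsum.summable.tsum_pos (fun p => minor_mul_minor_nonneg hrs huv p.1 p.2) (i, j)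
    (mul_pos_of_neg_of_neg (sub_neg.2 hrs_lt) (sub_neg.2 huv_lt))
  rw [hsum.tsum_eq] at hpos
  linarith

theorem pow_mul_pow_lt_pow_mul_pow {A : Type*} [CommSemiring A] [PartialOrder A]
    [IsStrictOrderedRing A] {x y : A} (hx : 0 < x) (hxy : x < y) {i j : ℕ} (hij : i < j) :
    y ^ i * x ^ j < y ^ j * x ^ i := by
  obtain ⟨k, rfl⟩ := Nat.exists_eq_add_of_le hij.le
  have hk : k ≠ 0 := by omega
  have hy : 0 < y := hx.trans hxy
  calc y ^ i * x ^ (i + k) = y ^ i * x ^ i * x ^ k := by ring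
    _ < y ^ i * x ^ i * y ^ k := by gcongr
    _ = y ^ (i + k) * x ^ i := by ring

/-- The monotonicity of `r n / s n` is cross-multiplied so that indices with `r n = s n = 0`, where
the quotient is undefined, are skipped. -/
theorem stmt_3_general {r s : ℕ → ℝ} (hs : ∀ n, 0 ≤ s n)
    (hrs : ∀ ⦃i j⦄, i < j → r i * s j ≤ r j * s i) (hlt : ∃ i j, i < j ∧ r i * s j < r j * s i) :
    StrictMonoOn (fun x : ℝ => (∑' n, r n * x ^ n) / ∑' n, s n * x ^ n)
      {x | 0 < x ∧ Summable (fun n => r n * x ^ n) ∧ Summable fun n => s n * x ^ n} := by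
  obtain ⟨i, j, hij, hlt⟩ := hlt
  obtain ⟨k, hk⟩ : ∃ k, 0 < s k := by
    by_contra! hnonpos
    have hzero : ∀ n, s n = 0 := fun n => (hnonpos n).antisymm (hs n)
    simp [hzero] at hlt
  have hpos : ∀ {x : ℝ}, 0 < x → Summable (fun n => s n * x ^ n) → 0 < ∑' n, s n * x ^ n :=
    fun hx hsx => hsx.tsum_pos (fun n => mul_nonneg (hs n) (pow_pos hx n).le) k
      (mul_pos hk (pow_pos hx k))
  rintro x ⟨hx, hrx, hsx⟩ y ⟨hy, hry, hsy⟩ hxy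
  exact (div_lt_div_iff₀ (hpos hx hsx) (hpos hy hsy)).2 <|
    tsum_mul_tsum_lt_tsum_mul_tsum hry hrx hsy hsx hrs
      (fun _ _ h => (pow_mul_pow_lt_pow_mul_pow hx hxy h).le) hlt
      (pow_mul_pow_lt_pow_mul_pow hx hxy hij)

theorem stmt_3 (r s : ℕ → ℝ) (hs : ∀ n, 0 < s n)
    (hr : ∀ x : ℝ, |x| < 1 → Summable (fun n => r n * x ^ n))
    (hs' : ∀ x : ℝ, |x| < 1 → Summable (fun n => s n * x ^ n))
    (hmono : StrictMono (fun n => r n / s n)) :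
    StrictMonoOn (fun x => (∑' n : ℕ, r n * x ^ n) / (∑' n : ℕ, s n * x ^ n))
      (Set.Ioo (0 : ℝ) 1) := by
  have hrs : ∀ ⦃i j⦄, i < j → r i * s j < r j * s i := fun i j hij =>
    (div_lt_div_iff₀ (hs i) (hs j)).1 (hmono hij)
  refine (stmt_3_general (fun n => (hs n).le) (fun _ _ hij => (hrs hij).le)
    ⟨0, 1, zero_lt_one, hrs zero_lt_one⟩).mono fun x hx => ?_
  have hx1 : |x| < 1 := (abs_of_pos hx.1).trans_lt hx.2
  exact ⟨hx.1, hr x hx1, hs' x hx1⟩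
end

section
/- For n ∈ ℕ₀ fixed, the infimum over a ∈ (0,1/2] of λ₈(a) = a[ψ(n+a+1) - ψ(n+3-a) + ψ(1-a) - ψ(a)] equals -1/(2n+3), attained at a = 1/2. -/
/-- The digamma function ψ(x) = Γ'(x)/Γ(x), as the derivative of log ∘ Γ. -/
noncomputable def digamma (x : ℝ) : ℝ := deriv (fun y => Real.log (Real.Gamma y)) x

/-!
Split off the last step of the increment of `ψ` from `1 - a` to `n + 3 - a`. With
`Δ x = ψ (x + (n + 1)) - ψ x`, this gives `λ₈(a) = a * (Δ a - Δ (1 - a)) - a / (n + 2 - a)`.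
Since `Δ x = ∑_{k ≤ n} 1 / (x + k)` is decreasing and `a ≤ 1 - a`, the first term is nonnegative;
it vanishes at `a = 1 / 2`, where `a / (n + 2 - a)` attains its maximum `1 / (2 * n + 3)`.
-/

open scoped fwdDiff

lemma ne_neg_natCast_of_pos {x : ℝ} (hx : 0 < x) (m : ℕ) : x ≠ -m :=
  ((neg_nonpos.mpr m.cast_nonneg).trans_lt hx).ne'

lemma digamma_add_one {x : ℝ} (hx : ∀ m : ℕ, x ≠ -m) :
    digamma (x + 1) = digamma x + x⁻¹ := by
  have hx₀ : x ≠ 0 := by simpa using hx 0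
  have hΓx := Real.Gamma_ne_zero hx
  have hΓ_diff := Real.differentiableAt_Gamma hx
  have log_Gamma_add_one : (fun y => Real.log (Real.Gamma (y + 1))) =ᶠ[nhds x]
      fun y => Real.log (Real.Gamma y) + Real.log y := by
    filter_upwards [hΓ_diff.continuousAt.eventually_ne hΓx, eventually_ne_nhds hx₀] with y hΓy hy
    rw [Real.Gamma_add_one hy, Real.log_mul hy hΓy, add_comm]
  unfold digamma
  rw [← deriv_comp_add_const (fun y => Real.log (Real.Gamma y)), log_Gamma_add_one.deriv_eq,
    deriv_fun_add (hΓ_diff.log hΓx) (Real.differentiableAt_log hx₀), Real.deriv_log]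

lemma fwdDiff_natCast_digamma {x : ℝ} (hx : ∀ m : ℕ, x ≠ -m) (m : ℕ) :
    Δ_[(m : ℝ)] digamma x = ∑ k ∈ Finset.range m, (x + k)⁻¹ := by
  induction m with
  | zero => simp [fwdDiff]
  | succ m ih =>
    have hxm (k : ℕ) : x + m ≠ -k := fun h => hx (m + k) (by push_cast; linarith)
    rw [Finset.sum_range_succ, ← ih, fwdDiff, fwdDiff, Nat.cast_succ, ← add_assoc,
      digamma_add_one hxm]
    ring

lemma antitoneOn_fwdDiff_natCast_digamma (m : ℕ) :
    AntitoneOn (Δ_[(m : ℝ)] digamma) (Set.Ioi 0) := by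
  intro x hx y hy hxy
  rw [Set.mem_Ioi] at hx
  rw [fwdDiff_natCast_digamma (ne_neg_natCast_of_pos hx),
    fwdDiff_natCast_digamma (ne_neg_natCast_of_pos hy)]
  gcongr

/-- The function `λ₈` of the theorem, with its parameter `n` allowed to be real. -/
noncomputable def lambdaEight (n a : ℝ) : ℝ :=
  a * (digamma (n + a + 1) - digamma (n + 3 - a) + digamma (1 - a) - digamma a)

lemma lambdaEight_eq_fwdDiff {n a : ℝ} (hna : ∀ m : ℕ, n + 2 - a ≠ -m) :
    lambdaEight n a =
      a * (Δ_[n + 1] digamma a - Δ_[n + 1] digamma (1 - a)) - a / (n + 2 - a) := by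
  have last_step : digamma (n + 3 - a) = digamma (n + 2 - a) + (n + 2 - a)⁻¹ := by
    rw [← digamma_add_one hna]
    ring_nf
  rw [lambdaEight, last_step, fwdDiff, fwdDiff, show a + (n + 1) = n + a + 1 by ring,
    show 1 - a + (n + 1) = n + 2 - a by ring]
  ring

lemma lambdaEight_one_half {n : ℝ} (hn : ∀ m : ℕ, n + 2 - 1 / 2 ≠ -m) :
    lambdaEight n (1 / 2) = -(1 / (2 * n + 3)) := by
  rw [lambdaEight_eq_fwdDiff hn, sub_half, sub_self, mul_zero, zero_sub, div_div,
    show 2 * (n + 2 - 1 / 2) = 2 * n + 3 by ring]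

lemma div_add_two_sub_le {n a : ℝ} (hn : -3 / 2 < n) (ha : a ≤ 1 / 2) :
    a / (n + 2 - a) ≤ 1 / (2 * n + 3) := by
  have hn₂ : 0 ≤ n + 2 := by linarith
  rw [div_le_div_iff₀ (by linarith) (by linarith)]
  linarith [mul_le_mul_of_nonneg_right ha hn₂]

lemma neg_one_div_le_lambdaEight (n : ℕ) {a : ℝ} (ha : a ∈ Set.Ioc 0 (1 / 2)) :
    -(1 / (2 * n + 3)) ≤ lambdaEight n a := by
  obtain ⟨ha₀, ha₁⟩ := ha
  have : (0 : ℝ) ≤ n := n.cast_nonneg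
  have increment_le : Δ_[(n + 1 : ℝ)] digamma (1 - a) ≤ Δ_[(n + 1 : ℝ)] digamma a := by
    exact_mod_cast antitoneOn_fwdDiff_natCast_digamma (n + 1) (Set.mem_Ioi.mpr ha₀)
      (Set.mem_Ioi.mpr (by linarith : 0 < 1 - a)) (by linarith)
  calc -(1 / (2 * (n : ℝ) + 3))
      ≤ -(a / (n + 2 - a)) := neg_le_neg (div_add_two_sub_le (by linarith) ha₁)
    _ ≤ a * (Δ_[(n + 1 : ℝ)] digamma a - Δ_[(n + 1 : ℝ)] digamma (1 - a)) - a / (n + 2 - a) := by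
      linarith [mul_nonneg ha₀.le (sub_nonneg.mpr increment_le)]
    _ = lambdaEight n a :=
      (lambdaEight_eq_fwdDiff (ne_neg_natCast_of_pos (by linarith))).symm

theorem stmt_14 (n : ℕ) :
    IsLeast ((fun a : ℝ => a * (digamma (n + a + 1) - digamma (n + 3 - a) +
        digamma (1 - a) - digamma a)) '' Set.Ioc 0 (1 / 2))
      (-(1 / (2 * n + 3))) ∧
    (1 / 2 : ℝ) * (digamma (n + (1 / 2 : ℝ) + 1) - digamma (n + 3 - (1 / 2 : ℝ)) +
        digamma (1 - (1 / 2 : ℝ)) - digamma (1 / 2 : ℝ)) = -(1 / (2 * n + 3)) := by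
  have value_at_half : lambdaEight n (1 / 2) = -(1 / (2 * n + 3)) :=
    lambdaEight_one_half (ne_neg_natCast_of_pos (by linarith [n.cast_nonneg (α := ℝ)]))
  have lower_bound : -(1 / (2 * (n : ℝ) + 3)) ∈ lowerBounds (lambdaEight n '' Set.Ioc 0 (1 / 2)) :=
    Set.forall_mem_image.mpr fun _ ha => neg_one_div_le_lambdaEight n ha
  exact ⟨⟨⟨1 / 2, by norm_num, value_at_half⟩, lower_bound⟩, value_at_half⟩
end
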